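/- For every p ∈ ℝ^{n+1}, the effective HOTS iteration does not increase the optimal dual value: θ(p', λ(p')) ≤ θ(p, λ(p)), where p' = f^{λ(p)}(p), f^λ is the map defined for fixed (μ, a, b) by f^λ_i(p) = (1/2)·(log(Σ_{j=1}^n A_{ji} e^{p_j} + e^{a + p_{n+1}}) − log(Σ_{k=1}^n A_{ik} e^{−p_k} + e^{−b − p_{n+1}})) for i ≤ n and f^λ_{n+1}(p) = (1/2)·(log(Σ_{j=1}^n e^{−b + p_j}) − log(Σ_{k=1}^n e^{a − p_k})), and θ(q, λ(q)) denotes θ evaluated at q and at the unique minimizing multipliers λ(q). -/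

import Mathlib

open BigOperators

/-- The effective HOTS dual function. -/
noncomputable def effDual {n : ℕ} (A : Matrix (Fin n) (Fin n) ℝ) (α : ℝ)
    (p : Fin (n + 1) → ℝ) (μ a b : ℝ) : ℝ :=
  (∑ i : Fin n, ∑ j : Fin n, A i j * Real.exp (p i.castSucc - p j.castSucc + μ))
    + (∑ i : Fin n, Real.exp (-b - p (Fin.last n) + p i.castSucc + μ))
    + (∑ j : Fin n, Real.exp (a + p (Fin.last n) - p j.castSucc + μ))
    - (1 - α) * a - μ + (1 - α) * b

/-- `σ(p) = Σ_{i,j} A_{ij} e^{p_i − p_j}`. -/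
noncomputable def sigmaP {n : ℕ} (A : Matrix (Fin n) (Fin n) ℝ) (p : Fin (n + 1) → ℝ) : ℝ :=
  ∑ i : Fin n, ∑ j : Fin n, A i j * Real.exp (p i.castSucc - p j.castSucc)

/-- The optimal multiplier `μ(p)`. -/
noncomputable def muOpt {n : ℕ} (A : Matrix (Fin n) (Fin n) ℝ) (α : ℝ)
    (p : Fin (n + 1) → ℝ) : ℝ :=
  Real.log ((2 * α - 1) / sigmaP A p)

/-- The optimal multiplier `a(p)`. -/
noncomputable def aOpt {n : ℕ} (A : Matrix (Fin n) (Fin n) ℝ) (α : ℝ)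
    (p : Fin (n + 1) → ℝ) : ℝ :=
  Real.log ((1 - α) / (2 * α - 1) * sigmaP A p /
    ∑ j : Fin n, Real.exp (p (Fin.last n) - p j.castSucc))

/-- The optimal multiplier `b(p)`. -/
noncomputable def bOpt {n : ℕ} (A : Matrix (Fin n) (Fin n) ℝ) (α : ℝ)
    (p : Fin (n + 1) → ℝ) : ℝ :=
  -Real.log ((1 - α) / (2 * α - 1) * sigmaP A p /
    ∑ i : Fin n, Real.exp (p i.castSucc - p (Fin.last n)))

/-- The fixed-multiplier map `f^λ` for `λ = (μ, a, b)` (it only depends on `a`, `b`). -/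
noncomputable def fLam {n : ℕ} (A : Matrix (Fin n) (Fin n) ℝ) (a b : ℝ)
    (p : Fin (n + 1) → ℝ) : Fin (n + 1) → ℝ :=
  Fin.lastCases
    ((1 / 2) * (Real.log (∑ j : Fin n, Real.exp (-b + p j.castSucc))
      - Real.log (∑ k : Fin n, Real.exp (a - p k.castSucc))))
    (fun i => (1 / 2) *
      (Real.log ((∑ j : Fin n, A j i * Real.exp (p j.castSucc))
          + Real.exp (a + p (Fin.last n)))
        - Real.log ((∑ k : Fin n, A i k * Real.exp (-(p k.castSucc)))
          + Real.exp (-b - p (Fin.last n)))))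

lemma hots_graph {ι : Type*} [Fintype ι] (B : ι → ι → ℝ) (hB : ∀ i j, 0 ≤ B i j)
    (q q' : ι → ℝ)
    (hc : ∀ i, 0 < ∑ j, B j i * Real.exp (q j))
    (hr : ∀ i, 0 < ∑ k, B i k * Real.exp (-(q k)))
    (hq : ∀ i, q' i = (1 / 2) * (Real.log (∑ j, B j i * Real.exp (q j))
      - Real.log (∑ k, B i k * Real.exp (-(q k))))) :
    ∑ i, ∑ j, B i j * Real.exp (q' i - q' j) ≤ ∑ i, ∑ j, B i j * Real.exp (q i - q j) := by
  set c : ι → ℝ := fun i => ∑ j, B j i * Real.exp (q j) with hcdef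
  set r : ι → ℝ := fun i => ∑ k, B i k * Real.exp (-(q k)) with hrdef
  have e1 : ∀ i, Real.exp (2 * q' i) = c i / r i := by
    intro i
    rw [hq i, show 2 * ((1 / 2) * (Real.log (c i) - Real.log (r i)))
      = Real.log (c i) - Real.log (r i) by ring, Real.exp_sub, Real.exp_log (hc i),
      Real.exp_log (hr i)]
  have e2 : ∀ i, Real.exp (-(2 * q' i)) = r i / c i := by
    intro i
    rw [Real.exp_neg, e1, inv_div]
  have key : ∀ i j, B i j * Real.exp (q' i - q' j) ≤
      (1 / 2) * ((B i j * Real.exp (-(q j))) * (Real.exp (-(q i)) * (c i / r i)))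
      + (1 / 2) * ((B i j * Real.exp (q i)) * (Real.exp (q j) * (r j / c j))) := by
    intro i j
    rw [← e1, ← e2]
    have h1 : Real.exp (-(q j)) * (Real.exp (-(q i)) * Real.exp (2 * q' i))
        = Real.exp (q' i - (q i + q j) / 2) ^ 2 := by
      rw [← Real.exp_add, ← Real.exp_add, ← Real.exp_nat_mul]; congr 1; push_cast; ring
    have h2 : Real.exp (q i) * (Real.exp (q j) * Real.exp (-(2 * q' j)))
        = Real.exp ((q i + q j) / 2 - q' j) ^ 2 := by
      rw [← Real.exp_add, ← Real.exp_add, ← Real.exp_nat_mul]; congr 1; push_cast; ring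
    have h3 : Real.exp (q' i - q' j)
        = Real.exp (q' i - (q i + q j) / 2) * Real.exp ((q i + q j) / 2 - q' j) := by
      rw [← Real.exp_add]; congr 1; ring
    rw [mul_assoc (B i j), mul_assoc (B i j), h1, h2, h3]
    nlinarith [mul_nonneg (hB i j) (sq_nonneg (Real.exp (q' i - (q i + q j) / 2) -
      Real.exp ((q i + q j) / 2 - q' j)))]
  have s1 : ∑ i, ∑ j, (B i j * Real.exp (-(q j))) * (Real.exp (-(q i)) * (c i / r i))
      = ∑ i, ∑ j, B i j * Real.exp (q i - q j) := by
    rw [Finset.sum_comm (f := fun i j => B i j * Real.exp (q i - q j))]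
    refine Finset.sum_congr rfl fun i _ => ?_
    rw [← Finset.sum_mul]
    change r i * _ = _
    have : r i ≠ 0 := (hr i).ne'
    rw [show r i * (Real.exp (-(q i)) * (c i / r i)) = c i * Real.exp (-(q i)) by
      field_simp, hcdef, Finset.sum_mul]
    refine Finset.sum_congr rfl fun j _ => ?_
    rw [mul_assoc, ← Real.exp_add]; rfl
  have s2 : ∑ i, ∑ j, (B i j * Real.exp (q i)) * (Real.exp (q j) * (r j / c j))
      = ∑ i, ∑ j, B i j * Real.exp (q i - q j) := by
    rw [Finset.sum_comm]
    refine Finset.sum_congr rfl fun i _ => ?_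
    rw [← Finset.sum_mul]
    change c i * _ = _
    have : c i ≠ 0 := (hc i).ne'
    rw [show c i * (Real.exp (q i) * (r i / c i)) = r i * Real.exp (q i) by
      field_simp, hrdef, Finset.sum_mul]
    refine Finset.sum_congr rfl fun j _ => ?_
    rw [mul_assoc, ← Real.exp_add]; congr 2; ring
  calc _ ≤ ∑ i, ∑ j, ((1 / 2) * ((B i j * Real.exp (-(q j))) * (Real.exp (-(q i)) * (c i / r i)))
      + (1 / 2) * ((B i j * Real.exp (q i)) * (Real.exp (q j) * (r j / c j)))) :=
        Finset.sum_le_sum fun i _ => Finset.sum_le_sum fun j _ => key i j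
    _ = _ := by
      simp only [Finset.sum_add_distrib, ← Finset.mul_sum]
      rw [s1, s2]; ring

noncomputable def hotsB {n : ℕ} (A : Matrix (Fin n) (Fin n) ℝ) (a b : ℝ) :
    Fin (n + 1) → Fin (n + 1) → ℝ := fun i j =>
  Fin.lastCases (motive := fun _ => ℝ)
    (Fin.lastCases (motive := fun _ => ℝ) 0 (fun _ => Real.exp a) j)
    (fun i => Fin.lastCases (motive := fun _ => ℝ) (Real.exp (-b)) (fun j => A i j) j) i

lemma effDual_eq {n : ℕ} (A : Matrix (Fin n) (Fin n) ℝ) (α : ℝ)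
    (p : Fin (n + 1) → ℝ) (μ a b : ℝ) :
    effDual A α p μ a b = Real.exp μ * (∑ i, ∑ j, hotsB A a b i j * Real.exp (p i - p j))
      - (1 - α) * a - μ + (1 - α) * b := by
  have h1 : ∀ i j : Fin n, Real.exp (p i.castSucc - p j.castSucc + μ)
      = Real.exp μ * Real.exp (p i.castSucc - p j.castSucc) := by
    intro i j; rw [← Real.exp_add]; congr 1; ring
  have h2 : ∀ i : Fin n, Real.exp (-b - p (Fin.last n) + p i.castSucc + μ)
      = Real.exp μ * (Real.exp (-b) * Real.exp (p i.castSucc - p (Fin.last n))) := by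
    intro i; rw [← Real.exp_add, ← Real.exp_add]; congr 1; ring
  have h3 : ∀ i : Fin n, Real.exp (a + p (Fin.last n) - p i.castSucc + μ)
      = Real.exp μ * (Real.exp a * Real.exp (p (Fin.last n) - p i.castSucc)) := by
    intro i; rw [← Real.exp_add, ← Real.exp_add]; congr 1; ring
  simp only [effDual, hotsB, Fin.sum_univ_castSucc, Fin.lastCases_castSucc, Fin.lastCases_last,
    h1, h2, h3, Finset.sum_add_distrib, mul_add, Finset.mul_sum, mul_left_comm (A _ _)]
  ring

lemma effDual_eq' {n : ℕ} (A : Matrix (Fin n) (Fin n) ℝ) (α : ℝ)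
    (p : Fin (n + 1) → ℝ) (μ a b : ℝ) :
    effDual A α p μ a b = Real.exp μ * sigmaP A p
      + Real.exp (μ - b) * (∑ i : Fin n, Real.exp (p i.castSucc - p (Fin.last n)))
      + Real.exp (μ + a) * (∑ j : Fin n, Real.exp (p (Fin.last n) - p j.castSucc))
      - (1 - α) * a - μ + (1 - α) * b := by
  have h1 : ∀ i j : Fin n, Real.exp (p i.castSucc - p j.castSucc + μ)
      = Real.exp μ * Real.exp (p i.castSucc - p j.castSucc) := by
    intro i j; rw [← Real.exp_add]; congr 1; ring
  have h2 : ∀ i : Fin n, Real.exp (-b - p (Fin.last n) + p i.castSucc + μ)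
      = Real.exp (μ - b) * (Real.exp (p i.castSucc - p (Fin.last n))) := by
    intro i; rw [← Real.exp_add]; congr 1; ring
  have h3 : ∀ i : Fin n, Real.exp (a + p (Fin.last n) - p i.castSucc + μ)
      = Real.exp (μ + a) * (Real.exp (p (Fin.last n) - p i.castSucc)) := by
    intro i; rw [← Real.exp_add]; congr 1; ring
  simp only [effDual, sigmaP, h1, h2, h3, Finset.mul_sum, mul_left_comm (A _ _)]

lemma hots_opt {n : ℕ} (A : Matrix (Fin n) (Fin n) ℝ)
    (hA : ∀ i j, 0 ≤ A i j) (hA0 : A ≠ 0) (α : ℝ) (hα₁ : 1 / 2 < α) (hα₂ : α < 1)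
    (p : Fin (n + 1) → ℝ) (μ a b : ℝ) :
    effDual A α p (muOpt A α p) (aOpt A α p) (bOpt A α p) ≤ effDual A α p μ a b := by
  obtain ⟨i0, j0, hij⟩ : ∃ i j, A i j ≠ 0 := by
    by_contra! h
    exact hA0 (by ext i j; exact h i j)
  have hσ : 0 < sigmaP A p := by
    refine Finset.sum_pos' (fun i _ => Finset.sum_nonneg fun j _ =>
      mul_nonneg (hA i j) (Real.exp_pos _).le) ⟨i0, Finset.mem_univ _, ?_⟩
    exact Finset.sum_pos' (fun j _ => mul_nonneg (hA i0 j) (Real.exp_pos _).le)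
      ⟨j0, Finset.mem_univ _, mul_pos (lt_of_le_of_ne (hA i0 j0) hij.symm) (Real.exp_pos _)⟩
  have hR : 0 < ∑ i : Fin n, Real.exp (p i.castSucc - p (Fin.last n)) :=
    Finset.sum_pos (fun i _ => Real.exp_pos _) ⟨i0, Finset.mem_univ _⟩
  have hC : 0 < ∑ j : Fin n, Real.exp (p (Fin.last n) - p j.castSucc) :=
    Finset.sum_pos (fun i _ => Real.exp_pos _) ⟨i0, Finset.mem_univ _⟩
  rw [effDual_eq', effDual_eq']
  have w1 : 0 < 2 * α - 1 := by linarith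
  have w2 : 0 < 1 - α := by linarith
  have hm : Real.exp (muOpt A α p) = (2 * α - 1) / sigmaP A p :=
    Real.exp_log (by positivity)
  have ha : Real.exp (aOpt A α p) = (1 - α) / (2 * α - 1) * sigmaP A p /
      ∑ j : Fin n, Real.exp (p (Fin.last n) - p j.castSucc) :=
    Real.exp_log (by positivity)
  have hb : Real.exp (-bOpt A α p) = (1 - α) / (2 * α - 1) * sigmaP A p /
      ∑ i : Fin n, Real.exp (p i.castSucc - p (Fin.last n)) := by
    rw [bOpt, neg_neg]
    exact Real.exp_log (by positivity)
  set S := sigmaP A p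
  set R := ∑ i : Fin n, Real.exp (p i.castSucc - p (Fin.last n))
  set C := ∑ j : Fin n, Real.exp (p (Fin.last n) - p j.castSucc)
  set m := muOpt A α p
  set x := aOpt A α p
  set y := bOpt A α p
  have t1 : Real.exp m * S = 2 * α - 1 := by rw [hm]; field_simp
  have t2 : Real.exp (m - y) * R = 1 - α := by
    rw [sub_eq_add_neg, Real.exp_add, hm, hb]; field_simp
  have t3 : Real.exp (m + x) * C = 1 - α := by
    rw [Real.exp_add, hm, ha]; field_simp
  have u1 : Real.exp μ * S = (2 * α - 1) * Real.exp (μ - m) := by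
    rw [← t1, mul_right_comm, ← Real.exp_add]; congr 2; ring
  have u2 : Real.exp (μ - b) * R = (1 - α) * Real.exp ((μ - b) - (m - y)) := by
    rw [← t2, mul_right_comm, ← Real.exp_add]; congr 2; ring
  have u3 : Real.exp (μ + a) * C = (1 - α) * Real.exp ((μ + a) - (m + x)) := by
    rw [← t3, mul_right_comm, ← Real.exp_add]; congr 2; ring
  rw [t1, t2, t3, u1, u2, u3]
  have v1 := mul_le_mul_of_nonneg_left (Real.add_one_le_exp (μ - m)) w1.le
  have v2 := mul_le_mul_of_nonneg_left (Real.add_one_le_exp ((μ - b) - (m - y))) w2.le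
  have v3 := mul_le_mul_of_nonneg_left (Real.add_one_le_exp ((μ + a) - (m + x))) w2.le
  nlinarith [v1, v2, v3]

lemma hots_step {n : ℕ} (hn : 0 < n) (A : Matrix (Fin n) (Fin n) ℝ)
    (hA : ∀ i j, 0 ≤ A i j) (α : ℝ) (p : Fin (n + 1) → ℝ) (μ a b : ℝ) :
    effDual A α (fLam A a b p) μ a b ≤ effDual A α p μ a b := by
  have : NeZero n := ⟨hn.ne'⟩
  have hBn : ∀ i j, 0 ≤ hotsB A a b i j := by
    intro i j
    induction i using Fin.lastCases <;> induction j using Fin.lastCases <;>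
      simp [hotsB, Real.exp_nonneg, hA]
  have hne : (Finset.univ : Finset (Fin n)).Nonempty := Finset.univ_nonempty
  have hC : ∀ i, ∑ j, hotsB A a b j i * Real.exp (p j) = Fin.lastCases (motive := fun _ => ℝ)
      (∑ j : Fin n, Real.exp (-b + p j.castSucc))
      (fun i => (∑ j : Fin n, A j i * Real.exp (p j.castSucc))
          + Real.exp (a + p (Fin.last n))) i := by
    intro i
    induction i using Fin.lastCases <;>
      simp [hotsB, Fin.sum_univ_castSucc, Real.exp_add]
  have hR : ∀ i, ∑ k, hotsB A a b i k * Real.exp (-(p k)) = Fin.lastCases (motive := fun _ => ℝ)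
      (∑ k : Fin n, Real.exp (a - p k.castSucc))
      (fun i => (∑ k : Fin n, A i k * Real.exp (-(p k.castSucc)))
          + Real.exp (-b - p (Fin.last n))) i := by
    intro i
    induction i using Fin.lastCases <;>
      simp [hotsB, Fin.sum_univ_castSucc, Real.exp_add, sub_eq_add_neg]
  have := hots_graph (hotsB A a b) hBn p (fLam A a b p) (by
    intro i
    rw [hC]
    induction i using Fin.lastCases with
    | last => simpa using Finset.sum_pos (fun i _ => Real.exp_pos _) hne
    | cast i =>
      simpa using add_pos_of_nonneg_of_pos (Finset.sum_nonneg fun j _ =>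
        mul_nonneg (hA j i) (Real.exp_pos _).le) (Real.exp_pos _)) (by
    intro i
    rw [hR]
    induction i using Fin.lastCases with
    | last => simpa using Finset.sum_pos (fun i _ => Real.exp_pos _) hne
    | cast i =>
      simpa using add_pos_of_nonneg_of_pos (Finset.sum_nonneg fun j _ =>
        mul_nonneg (hA i j) (Real.exp_pos _).le) (Real.exp_pos _)) (by
    intro i
    rw [hC, hR]
    induction i using Fin.lastCases <;> simp [fLam])
  rw [effDual_eq, effDual_eq]
  have h := mul_le_mul_of_nonneg_left this (Real.exp_pos μ).le
  linarith

/-- One step of the effective HOTS iteration does not increase the optimal dual value: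
`θ(p', λ(p')) ≤ θ(p, λ(p))` where `p' = f^{λ(p)}(p)`. -/
theorem effHots_step_decreases_dual {n : ℕ} (A : Matrix (Fin n) (Fin n) ℝ)
    (hA : ∀ i j, 0 ≤ A i j) (hA0 : A ≠ 0) (α : ℝ) (hα₁ : 1 / 2 < α) (hα₂ : α < 1)
    (p : Fin (n + 1) → ℝ) :
    effDual A α (fLam A (aOpt A α p) (bOpt A α p) p)
        (muOpt A α (fLam A (aOpt A α p) (bOpt A α p) p))
        (aOpt A α (fLam A (aOpt A α p) (bOpt A α p) p))
        (bOpt A α (fLam A (aOpt A α p) (bOpt A α p) p)) ≤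
      effDual A α p (muOpt A α p) (aOpt A α p) (bOpt A α p) := by
  have hn : 0 < n := by
    rcases Nat.eq_zero_or_pos n with h | h
    · subst h
      exact absurd (Subsingleton.elim A 0) hA0
    · exact h
  exact (hots_opt A hA hA0 α hα₁ hα₂ _ _ _ _).trans (hots_step hn A hA α p _ _ _)
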